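/- Let 𝕏 be a σ-finite measure space and ℳ, 𝒩 Banach L^0(𝕏)-modules. A tensor α = Σ_{i=1}^n v_i ⊗ w_i ∈ ℳ ⊗ 𝒩 is zero if and only if Σ_{i=1}^n ω(v_i)η(w_i) = 0 in L^0(𝕏) for every ω ∈ ℳ* and η ∈ 𝒩*. -/

import Mathlib

/-!
A vector `u` with `ω u • u = u` for some bounded functional `ω` is determined by its bounded
functionals, and this identity also makes `x ↦ ω x • u` a finite-rank map fixing `u`. Correcting one
vector at a time, one obtains a map `P = ∑ j, η j (·) • u j` with bounded `η j` that fixes finitely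
many prescribed vectors of `𝒩`. Then `α = (id ⊗ P) α = ∑ j, αⱼ ⊗ u j`, where `αⱼ ∈ ℳ` is the
contraction of `α` by `η j`. If all pairings of `α` with bounded `ω ⊗ η` vanish, then each `αⱼ` is
annihilated by every bounded `ω`, so `αⱼ = 0` and `α = 0`.

Such an `ω` is a Hahn–Banach functional norming `u`, divided by `|u|` where `|u| ≠ 0`. In the
one-step extension of a functional with values in `L⁰(𝕏)`, Dedekind completeness gives the value on
a new vector, and von Neumann regularity replaces division by a nonzero scalar `a`: the estimate is
checked separately on `{a ≠ 0}` and `{a = 0}`. Dedekind completeness is an exhaustion argument: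
`f ↦ ∫ arctan f` is strictly increasing and modular, so any sequence of finite suprema maximizing it
has the supremum of the whole family as its supremum.
-/

open MeasureTheory Filter Set TensorProduct

noncomputable section

namespace Paper

variable {X : Type*} [MeasurableSpace X]

/-- The space `L⁰(𝕏)` of real-valued measurable functions up to `μ`-a.e. equality. -/
abbrev L0 (μ : Measure X) : Type _ := X →ₘ[μ] ℝ

instance (μ : Measure X) : CommRing (L0 μ) :=
  { (inferInstance : AddCommGroup (L0 μ)), (inferInstance : CommMonoid (L0 μ)) with
    left_distrib := fun a b c => AEEqFun.toGerm_injective <| by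
      simp only [AEEqFun.mul_toGerm, AEEqFun.add_toGerm, mul_add]
    right_distrib := fun a b c => AEEqFun.toGerm_injective <| by
      simp only [AEEqFun.mul_toGerm, AEEqFun.add_toGerm, add_mul]
    zero_mul := fun a => AEEqFun.toGerm_injective <| by
      simp only [AEEqFun.mul_toGerm, AEEqFun.zero_toGerm, zero_mul]
    mul_zero := fun a => AEEqFun.toGerm_injective <| by
      simp only [AEEqFun.mul_toGerm, AEEqFun.zero_toGerm, mul_zero] }

/-- The distance on `L⁰(𝕏)` inducing the topology of convergence in measure, defined through
the auxiliary finite measure `μ.toFinite` (which satisfies `μ ≪ μ.toFinite ≪ μ`). -/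
noncomputable def dL0 (μ : Measure X) [SFinite μ] (f g : L0 μ) : ℝ :=
  ∫ x, min |f x - g x| 1 ∂(μ.toFinite)

/-- A Banach `L⁰(𝕏)`-module: a module over `L⁰(𝕏)` endowed with a pointwise norm, complete
with respect to the induced distance. -/
class BanachMod (μ : Measure X) [SFinite μ] (M : Type*) [AddCommGroup M]
    [Module (L0 μ) M] where
  pn : M → L0 μ
  pn_nonneg : ∀ v : M, 0 ≤ pn v
  pn_eq_zero : ∀ v : M, pn v = 0 ↔ v = 0
  pn_add_le : ∀ v w : M, pn (v + w) ≤ pn v + pn w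
  pn_smul : ∀ (f : L0 μ) (v : M), pn (f • v) = |f| * pn v
  complete : ∀ u : ℕ → M,
    (∀ ε : ℝ, 0 < ε → ∃ N : ℕ, ∀ m ≥ N, ∀ n ≥ N, dL0 μ (pn (u m - u n)) 0 < ε) →
    ∃ v : M, Tendsto (fun n => dL0 μ (pn (u n - v)) 0) atTop (nhds 0)

/-- The pointwise norm of a Banach `L⁰(𝕏)`-module, with the measure explicit. -/
noncomputable def pn (μ : Measure X) [SFinite μ] {M : Type*} [AddCommGroup M]
    [Module (L0 μ) M] [BanachMod μ M] (v : M) : L0 μ :=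
  BanachMod.pn v

/-- The distance on a Banach `L⁰(𝕏)`-module. -/
noncomputable def dM (μ : Measure X) [SFinite μ] {M : Type*} [AddCommGroup M]
    [Module (L0 μ) M] [BanachMod μ M] (v w : M) : ℝ :=
  dL0 μ (pn μ (v - w)) 0

section Defs

variable (μ : Measure X) [SFinite μ]
variable {M N : Type*} [AddCommGroup M] [Module (L0 μ) M] [BanachMod μ M]
  [AddCommGroup N] [Module (L0 μ) N] [BanachMod μ N]

/-- The set of admissible bounds of a map between Banach `L⁰(𝕏)`-modules; the pointwise norm
`|T|` of a homomorphism is the infimum of this set. -/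
def homBddSet (T : M → N) : Set (L0 μ) :=
  {g | 0 ≤ g ∧ ∀ v, pn μ (T v) ≤ g * pn μ v}

/-- A homomorphism of Banach `L⁰(𝕏)`-modules: an `L⁰(𝕏)`-linear map admitting a bound
`g ∈ L⁰(𝕏)⁺` with `|T v| ≤ g |v|` (equivalently, `L⁰(𝕏)`-linear and continuous). -/
def IsHom (T : M →ₗ[L0 μ] N) : Prop :=
  ∃ g, g ∈ homBddSet μ (⇑T)

/-- The set of admissible bounds of an `L⁰(𝕏)`-valued map (for elements of the dual module). -/
def dualBddSet (ω : M → L0 μ) : Set (L0 μ) :=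
  {g | 0 ≤ g ∧ ∀ v, |ω v| ≤ g * pn μ v}

/-- Membership in the dual module `ℳ*`: an `L⁰(𝕏)`-linear map `ω : ℳ → L⁰(𝕏)` admitting a
bound `g ∈ L⁰(𝕏)⁺` with `|ω v| ≤ g |v|`. -/
def IsDual (ω : M →ₗ[L0 μ] L0 μ) : Prop :=
  ∃ g, g ∈ dualBddSet μ (⇑ω)

/-- Membership in the unit disc `𝔻_{ℳ*}` of the dual module: `|ω| ≤ 1`, equivalently
`|ω v| ≤ |v|` for every `v`. -/
def InDualDisc (ω : M →ₗ[L0 μ] L0 μ) : Prop :=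
  ∀ v, |ω v| ≤ pn μ v

/-- The family of pointwise norms `|s - ∑_{i ∈ F ∪ G} v i|` for `G` finite disjoint from `F`,
whose `F`-indexed inf-sup being `0` defines `s = ∑_{i∈I} v i`. -/
def sumUB {I : Type*} (v : I → M) (s : M) (F : Finset I) : Set (L0 μ) :=
  {g | ∃ G : Finset I, Disjoint G F ∧ g = pn μ (s - (∑ i ∈ F, v i + ∑ i ∈ G, v i))}

/-- `HasSumMod μ v s` means that the family `{v_i}` is summable in the Banach `L⁰(𝕏)`-module
with sum `s`, i.e. `⋀_F ⋁_G |s - ∑_{i ∈ F ∪ G} v_i| = 0` (the inner suprema being the values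
of `b`, and the outer infimum being `0`). -/
def HasSumMod {I : Type*} (v : I → M) (s : M) : Prop :=
  ∃ b : Finset I → L0 μ, (∀ F, IsLUB (sumUB μ v s F) (b F)) ∧ IsGLB (Set.range b) 0

/-- A family in a Banach `L⁰(𝕏)`-module is summable if it has a sum. -/
def SummableMod {I : Type*} (v : I → M) : Prop :=
  ∃ s, HasSumMod μ v s

/-- The partial sums `∑_{i ∈ F} |v i|` of the pointwise norms of a family; the element `|v|₁`
of `ℓ₁(I, ℳ)` is the supremum of this set. -/
def l1PartialSums {I : Type*} (v : I → M) : Set (L0 μ) :=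
  {g | ∃ F : Finset I, g = ∑ i ∈ F, pn μ (v i)}

/-- Membership in `ℓ₁(I, ℳ)`: the partial sums of the pointwise norms admit a supremum
(equivalently, an upper bound) in `L⁰(𝕏)`. -/
def Meml1 {I : Type*} (v : I → M) : Prop :=
  ∃ b, IsLUB (l1PartialSums μ v) b

/-- The partial sums `∑_{i ∈ F} |v i|` for an `L⁰(𝕏)`-valued family. -/
def l1PartialSumsF {I : Type*} (v : I → L0 μ) : Set (L0 μ) :=
  {g | ∃ F : Finset I, g = ∑ i ∈ F, |v i|}

/-- Membership in `ℓ₁(I, L⁰(𝕏))`. -/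
def Meml1F {I : Type*} (v : I → L0 μ) : Prop :=
  ∃ b, IsLUB (l1PartialSumsF μ v) b

/-- The set whose infimum defines the projective pointwise norm: all values
`∑_{i=1}^n |v_i||w_i|` over representations `α = ∑_{i=1}^n v_i ⊗ w_i`. -/
def piReps (α : M ⊗[L0 μ] N) : Set (L0 μ) :=
  {g | ∃ (n : ℕ) (v : Fin n → M) (w : Fin n → N),
    α = ∑ i, v i ⊗ₜ[L0 μ] w i ∧ g = ∑ i, pn μ (v i) * pn μ (w i)}

/-- The set whose supremum defines the injective pointwise norm: all values
`|∑_{i=1}^n ω(v_i) η(w_i)|` over representations `α = ∑_{i=1}^n v_i ⊗ w_i` and elements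
`ω ∈ 𝔻_{ℳ*}`, `η ∈ 𝔻_{𝒩*}`. -/
def epsReps (α : M ⊗[L0 μ] N) : Set (L0 μ) :=
  {g | ∃ (n : ℕ) (v : Fin n → M) (w : Fin n → N)
    (ω : M →ₗ[L0 μ] L0 μ) (η : N →ₗ[L0 μ] L0 μ), InDualDisc μ ω ∧ InDualDisc μ η ∧
    α = ∑ i, v i ⊗ₜ[L0 μ] w i ∧ g = |∑ i, ω (v i) * η (w i)|}

/-- `IsPiTensor μ M N P e` states that the Banach `L⁰(𝕏)`-module `P`, together with the
`L⁰(𝕏)`-linear map `e` defined on the algebraic tensor product, realizes the projective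
tensor product `ℳ ⊗̂_π 𝒩`: the pointwise norm of `e α` is the projective pointwise norm
`|α|_π` and the image of `e` is dense. -/
structure IsPiTensor (M N P : Type*) [AddCommGroup M] [Module (L0 μ) M] [BanachMod μ M]
    [AddCommGroup N] [Module (L0 μ) N] [BanachMod μ N]
    [AddCommGroup P] [Module (L0 μ) P] [BanachMod μ P]
    (e : M ⊗[L0 μ] N →ₗ[L0 μ] P) : Prop where
  pn_emb : ∀ α : M ⊗[L0 μ] N, IsGLB (piReps μ α) (pn μ (e α))
  dense : ∀ p : P, ∀ ε : ℝ, 0 < ε → ∃ α : M ⊗[L0 μ] N, dM μ (e α) p < ε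

/-- `IsEpsTensor μ M N P e` states that the Banach `L⁰(𝕏)`-module `P`, together with the
`L⁰(𝕏)`-linear map `e` defined on the algebraic tensor product, realizes the injective
tensor product `ℳ ⊗̂_ε 𝒩`: the pointwise norm of `e α` is the injective pointwise norm
`|α|_ε` and the image of `e` is dense. -/
structure IsEpsTensor (M N P : Type*) [AddCommGroup M] [Module (L0 μ) M] [BanachMod μ M]
    [AddCommGroup N] [Module (L0 μ) N] [BanachMod μ N]
    [AddCommGroup P] [Module (L0 μ) P] [BanachMod μ P]
    (e : M ⊗[L0 μ] N →ₗ[L0 μ] P) : Prop where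
  pn_emb : ∀ α : M ⊗[L0 μ] N, IsLUB (epsReps μ α) (pn μ (e α))
  dense : ∀ p : P, ∀ ε : ℝ, 0 < ε → ∃ α : M ⊗[L0 μ] N, dM μ (e α) p < ε

end Defs

section Valuation

theorem exists_isLUB_of_strictMono_of_modular {L : Type*} [Lattice L] {I : L → ℝ}
    (hI : StrictMono I) (hmod : ∀ a b, I (a ⊔ b) + I (a ⊓ b) = I a + I b)
    (hσ : ∀ f : ℕ → L, BddAbove (range f) → ∃ g, IsLUB (range f) g)
    {S : Set L} (hS : S.Nonempty) (hb : BddAbove S) : ∃ g, IsLUB S g := by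
  have hbdd : BddAbove (I '' supClosure S) :=
    hI.monotone.map_bddAbove (by rwa [BddAbove, upperBounds_supClosure])
  obtain ⟨u, -, hu, hmem⟩ := exists_seq_tendsto_sSup
    ((hS.mono subset_supClosure).image I) hbdd
  choose f hfS hfu using hmem
  have hfub : upperBounds S ⊆ upperBounds (range f) := by
    rw [← upperBounds_supClosure]
    exact upperBounds_mono_set (range_subset_iff.2 hfS)
  obtain ⟨g, hg⟩ := hσ f (Set.Nonempty.mono hfub hb)
  refine ⟨g, fun h hh => ?_, fun c hc => hg.2 (hfub hc)⟩
  have hgain : ∀ n, I (h ⊔ g) + u n ≤ I g + sSup (I '' supClosure S) := fun n => by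
    have hinf : I (h ⊓ f n) ≤ I (h ⊓ g) :=
      hI.monotone (inf_le_inf_left h (hg.1 (mem_range_self n)))
    have hsup : I (h ⊔ f n) ≤ sSup (I '' supClosure S) :=
      le_csSup hbdd (mem_image_of_mem I (supClosed_supClosure (subset_supClosure hh) (hfS n)))
    linarith [hmod h g, hmod h (f n), hfu n]
  have hle : I (h ⊔ g) ≤ I g :=
    le_of_add_le_add_right (le_of_tendsto' (hu.const_add (I (h ⊔ g))) hgain)
  exact sup_eq_right.1 (le_sup_right.eq_of_not_lt fun hlt => (hI hlt).not_ge hle).symm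

end Valuation

section FRing

/-- The *f-rings* among the commutative lattice-ordered rings with `0 ≤ 1`: those whose absolute
value is multiplicative. Multiplicativity is what gives `|a • y| ≤ p (a • x)` from `|y| ≤ p x`
for a seminorm `p` with values in the ring. -/
class IsFRing (R : Type*) [CommRing R] [Lattice R] : Prop extends IsOrderedRing R where
  abs_mul_eq (a b : R) : |a * b| = |a| * |b|

/-- Von Neumann regular rings, stated for a multiplication: if `a * b * a = a`, then `a * b` is an
idempotent, which plays the role of the indicator function of `{a ≠ 0}`. -/
class IsVonNeumannRegular (R : Type*) [Mul R] : Prop where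
  exists_mul_mul_self (a : R) : ∃ b, a * b * a = a

variable {R : Type*} [CommRing R] [Lattice R]

theorem abs_one_eq_one [IsOrderedRing R] : |(1 : R)| = 1 :=
  abs_of_nonneg zero_le_one

theorem abs_add_abs_one_sub_of_isIdempotentElem [IsFRing R] {e : R} (he : IsIdempotentElem e) :
    |e| + |1 - e| = 1 := by
  have hsq : (|e| + |1 - e|) * (|e| + |1 - e|) = |e| + |1 - e| := by
    have hee : |e| * |e| = |e| := by rw [← IsFRing.abs_mul_eq, he.eq]
    have hff : |1 - e| * |1 - e| = |1 - e| := by rw [← IsFRing.abs_mul_eq, he.one_sub.eq]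
    have hef : |e| * |1 - e| = 0 := by rw [← IsFRing.abs_mul_eq, he.mul_one_sub_self, abs_zero]
    linear_combination hee + hff + 2 * hef
  have hge : 1 ≤ |e| + |1 - e| := by
    simpa [abs_one_eq_one] using abs_add_le e (1 - e)
  have hle : 1 * (|e| + |1 - e| - 1) ≤ (|e| + |1 - e|) * (|e| + |1 - e| - 1) :=
    mul_le_mul_of_nonneg_right hge (sub_nonneg.2 hge)
  rw [one_mul, mul_sub, hsq, mul_one, sub_self, sub_nonpos] at hle
  exact hle.antisymm hge

end FRing

section Seminorm

variable {R M : Type*} [CommRing R] [Lattice R] [AddCommGroup M] [Module R M]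

/-- A seminorm on `M` with values in the lattice-ordered ring of scalars; its nonnegativity is
`IsPointwiseSeminorm.nonneg`. -/
structure IsPointwiseSeminorm (p : M → R) : Prop where
  add_le (x y : M) : p (x + y) ≤ p x + p y
  smul (a : R) (x : M) : p (a • x) = |a| * p x

/-- A pointwise norm `p = |·|` in the sense of normed `L⁰(𝕏)`-modules, over an arbitrary
lattice-ordered ring. -/
structure IsPointwiseNorm (p : M → R) : Prop extends IsPointwiseSeminorm p where
  eq_zero {x : M} : p x = 0 → x = 0

namespace IsPointwiseSeminorm

variable {p : M → R}

theorem map_zero [IsOrderedRing R] (hp : IsPointwiseSeminorm p) : p 0 = 0 := by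
  simpa using hp.smul 0 0

theorem map_neg [IsOrderedRing R] (hp : IsPointwiseSeminorm p) (x : M) : p (-x) = p x := by
  simpa [abs_one_eq_one] using hp.smul (-1) x

theorem sub_le [IsOrderedRing R] (hp : IsPointwiseSeminorm p) (x y : M) :
    p (x - y) ≤ p x + p y := by
  simpa [sub_eq_add_neg, hp.map_neg] using hp.add_le x (-y)

theorem nonneg [IsOrderedRing R] (hp : IsPointwiseSeminorm p) (x : M) : 0 ≤ p x :=
  nsmul_two_semiclosed (by simpa [hp.map_zero, two_mul] using hp.sub_le x x)

theorem abs_le_of_isIdempotentElem [IsFRing R] (hp : IsPointwiseSeminorm p) {e : R}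
    (he : IsIdempotentElem e) {x : M} {y : R} (h : |e * y| ≤ p (e • x))
    (h' : |(1 - e) * y| ≤ p ((1 - e) • x)) : |y| ≤ p x :=
  calc |y| = |e * y + (1 - e) * y| := by ring_nf
    _ ≤ |e * y| + |(1 - e) * y| := abs_add_le _ _
    _ ≤ p (e • x) + p ((1 - e) • x) := add_le_add h h'
    _ = (|e| + |1 - e|) * p x := by rw [hp.smul, hp.smul, add_mul]
    _ = p x := by rw [abs_add_abs_one_sub_of_isIdempotentElem he, one_mul]

end IsPointwiseSeminorm

end Seminorm

section HahnBanach

variable {R M : Type*} [CommRing R] [AddCommGroup M] [Module R M] {p : M → R}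

/-- `G` satisfies `|y| ≤ p x` for all `(x, y) ∈ G`. For a pointwise seminorm `p` such a `G` is the
graph of a `p`-bounded functional on a submodule of `M`. -/
def IsDominated [Lattice R] (p : M → R) (G : Submodule R (M × R)) : Prop :=
  ∀ z ∈ G, |z.2| ≤ p z.1

theorem isDominated_span_singleton [Lattice R] [IsFRing R] (hp : IsPointwiseSeminorm p) {x : M}
    {y : R} (h : |y| ≤ p x) : IsDominated p (Submodule.span R {(x, y)}) := by
  intro z hz
  obtain ⟨a, rfl⟩ := Submodule.mem_span_singleton.1 hz
  calc |a * y| = |a| * |y| := IsFRing.abs_mul_eq a y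
    _ ≤ |a| * p x := mul_le_mul_of_nonneg_left h (abs_nonneg a)
    _ = p (a • x) := (hp.smul a x).symm

namespace IsDominated

variable {G : Submodule R (M × R)}

theorem exists_maximal_ge [Lattice R] (hG : IsDominated p G) :
    ∃ G', G ≤ G' ∧ Maximal (IsDominated p) G' := by
  refine zorn_le_nonempty₀ {G | IsDominated p G} (fun C hC hchain G₀ hG₀ => ?_) G hG
  refine ⟨sSup C, fun z hz => ?_, fun _ => le_sSup⟩
  obtain ⟨G, hGC, hzG⟩ := (Submodule.mem_sSup_of_directed ⟨G₀, hG₀⟩ hchain.directedOn).1 hz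
  exact hC hGC z hzG

theorem eq_zero [Lattice R] [IsOrderedRing R] (hp : IsPointwiseSeminorm p) (hG : IsDominated p G)
    {y : R} (hy : (0, y) ∈ G) : y = 0 := by
  obtain ⟨hle, hge⟩ := abs_le'.1 ((hG _ hy).trans_eq hp.map_zero)
  exact hle.antisymm (neg_nonpos.1 hge)

theorem exists_forall_abs_add_le [ConditionallyCompleteLattice R] [IsOrderedRing R]
    (hp : IsPointwiseSeminorm p) (hG : IsDominated p G) (x : M) :
    ∃ c, ∀ z ∈ G, |z.2 + c| ≤ p (z.1 + x) := by
  have hcross : ∀ z ∈ G, ∀ z' ∈ G, -p (z.1 + x) - z.2 ≤ p (z'.1 + x) - z'.2 := fun z hz z' hz' => by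
    have hdiff : z'.2 - z.2 ≤ p (z'.1 + x) + p (z.1 + x) :=
      calc z'.2 - z.2 ≤ |(z' - z).2| := le_abs_self _
        _ ≤ p (z' - z).1 := hG _ (G.sub_mem hz' hz)
        _ = p ((z'.1 + x) - (z.1 + x)) := by rw [add_sub_add_right_eq_sub, Prod.fst_sub]
        _ ≤ p (z'.1 + x) + p (z.1 + x) := hp.sub_le _ _
    linear_combination hdiff
  have hG0 : (G : Set (M × R)).Nonempty := ⟨0, G.zero_mem⟩
  obtain ⟨c, hcl, hcu⟩ := exists_between_of_forall_le
    (hG0.image fun z => -p (z.1 + x) - z.2) (hG0.image fun z => p (z.1 + x) - z.2)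
    (by rintro _ ⟨z, hz, rfl⟩ _ ⟨z', hz', rfl⟩; exact hcross z hz z' hz')
  refine ⟨c, fun z hz => abs_le'.2 ⟨?_, ?_⟩⟩
  · exact le_sub_iff_add_le'.1 (hcu (mem_image_of_mem _ hz))
  · exact neg_le.1 (sub_le_iff_le_add'.1 (hcl (mem_image_of_mem _ hz)))

theorem sup_span_singleton [Lattice R] [IsFRing R] [IsVonNeumannRegular R]
    (hp : IsPointwiseSeminorm p) (hG : IsDominated p G) {x : M} {c : R}
    (hc : ∀ z ∈ G, |z.2 + c| ≤ p (z.1 + x)) :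
    IsDominated p (G ⊔ Submodule.span R {(x, c)}) := by
  intro t ht
  obtain ⟨z, hz, _, hq, rfl⟩ := Submodule.mem_sup.1 ht
  obtain ⟨a, rfl⟩ := Submodule.mem_span_singleton.1 hq
  obtain ⟨b, hab⟩ := IsVonNeumannRegular.exists_mul_mul_self a
  refine hp.abs_le_of_isIdempotentElem (e := a * b) (by
    rw [IsIdempotentElem, ← mul_assoc, hab]) ?_ ?_
  · have hsupp : (a * b) • (z + a • (x, c)) = a • (b • z + (x, c)) := by
      rw [smul_add, smul_add, smul_smul, smul_smul, hab]
    calc |((a * b) • (z + a • (x, c))).2| = |a * (b • z + (x, c)).2| := by rw [hsupp]; rfl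
      _ = |a| * |(b • z).2 + c| := IsFRing.abs_mul_eq _ _
      _ ≤ |a| * p ((b • z).1 + x) :=
        mul_le_mul_of_nonneg_left (hc _ (G.smul_mem b hz)) (abs_nonneg a)
      _ = p ((a * b) • (z + a • (x, c))).1 := by rw [hsupp]; exact (hp.smul _ _).symm
  · have hcompl : (1 - a * b) • (z + a • (x, c)) = (1 - a * b) • z := by
      rw [smul_add, smul_smul, sub_mul, one_mul, hab, sub_self, zero_smul, add_zero]
    change |((1 - a * b) • (z + a • (x, c))).2| ≤ p ((1 - a * b) • (z + a • (x, c))).1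
    rw [hcompl]
    exact hG _ (G.smul_mem _ hz)

end IsDominated

variable [ConditionallyCompleteLattice R] [IsFRing R] [IsVonNeumannRegular R]

theorem exists_mem_of_maximal_isDominated (hp : IsPointwiseSeminorm p)
    {G : Submodule R (M × R)} (hG : Maximal (IsDominated p) G) (x : M) : ∃ c, (x, c) ∈ G := by
  obtain ⟨c, hc⟩ := hG.prop.exists_forall_abs_add_le hp x
  exact ⟨c, hG.le_of_ge (hG.prop.sup_span_singleton hp hc) le_sup_left
    (Submodule.mem_sup_right (Submodule.mem_span_singleton_self _))⟩

/-- The Hahn–Banach theorem, with the functional to be extended given by its graph `G`. -/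
theorem IsDominated.exists_extension (hp : IsPointwiseSeminorm p) {G : Submodule R (M × R)}
    (hG : IsDominated p G) :
    ∃ ω : Module.Dual R M, (∀ x, |ω x| ≤ p x) ∧ G ≤ ω.graph := by
  obtain ⟨G', hGG', hmax⟩ := hG.exists_maximal_ge
  have hinj : Function.Injective (Prod.fst ∘ G'.subtype) :=
    (injective_iff_map_eq_zero (LinearMap.fst R M R ∘ₗ G'.subtype)).2 fun ⟨⟨x, y⟩, hz⟩ hx => by
      obtain rfl : x = 0 := hx
      simpa using hmax.prop.eq_zero hp hz
  have hsurj : Function.Surjective (Prod.fst ∘ G'.subtype) := fun x => by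
    obtain ⟨c, hc⟩ := exists_mem_of_maximal_isDominated hp hmax x
    exact ⟨⟨(x, c), hc⟩, rfl⟩
  obtain ⟨ω, rfl⟩ := Submodule.exists_eq_graph ⟨hinj, hsurj⟩
  exact ⟨ω, fun x => hmax.prop (x, ω x) rfl, hGG'⟩

theorem exists_dual_abs_le_apply_eq (hp : IsPointwiseSeminorm p) (u : M) :
    ∃ ω : Module.Dual R M, (∀ x, |ω x| ≤ p x) ∧ ω u = p u := by
  have hu : |p u| ≤ p u := (abs_of_nonneg (hp.nonneg u)).le
  obtain ⟨ω, hω, hgraph⟩ := (isDominated_span_singleton hp hu).exists_extension hp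
  exact ⟨ω, hω, (hgraph (Submodule.mem_span_singleton_self _)).symm⟩

end HahnBanach

section RegularDual

variable {R M N : Type*} [CommRing R] [AddCommGroup M] [Module R M] [AddCommGroup N] [Module R N]

/-- Zelmanowitz regularity of `M`, with the functionals `ω` that satisfy `ω u • u = u` taken from a
given submodule `E` of the dual. -/
def IsRegularDual (E : Submodule R (Module.Dual R M)) : Prop :=
  ∀ u, ∃ ω ∈ E, ω u • u = u

theorem IsRegularDual.eq_zero {E : Submodule R (Module.Dual R M)} (hE : IsRegularDual E) {u : M}
    (h : ∀ ω ∈ E, ω u = 0) : u = 0 := by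
  obtain ⟨ω, hω, hωu⟩ := hE u
  rw [← hωu, h ω hω, zero_smul]

/-- The finite-rank endomorphisms `x ↦ ∑ j, η j x • u j` with `η j ∈ E`. -/
def finiteRank (E : Submodule R (Module.Dual R N)) : Submodule R (Module.End R N) :=
  Submodule.map₂ LinearMap.smulRightₗ E ⊤

theorem smulRight_mem_finiteRank {E : Submodule R (Module.Dual R N)} {η : Module.Dual R N}
    (hη : η ∈ E) (u : N) : η.smulRight u ∈ finiteRank E :=
  Submodule.apply_mem_map₂ LinearMap.smulRightₗ hη Submodule.mem_top

theorem comp_mem_of_mem_finiteRank {E : Submodule R (Module.Dual R N)} (ω : Module.Dual R N)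
    {P : Module.End R N} (hP : P ∈ finiteRank E) : ω ∘ₗ P ∈ E := by
  have hle : finiteRank E ≤ E.comap (LinearMap.llcomp R N N R ω) :=
    Submodule.map₂_le.2 fun η hη u _ => by
      have hcomp : ω ∘ₗ η.smulRight u = ω u • η := by ext x; simp [mul_comm]
      change ω ∘ₗ η.smulRight u ∈ E
      rw [hcomp]
      exact E.smul_mem (ω u) hη
  exact hle hP

theorem IsRegularDual.exists_finiteRank_eqOn {E : Submodule R (Module.Dual R N)}
    (hE : IsRegularDual E) {s : Set N} (hs : s.Finite) :
    ∃ P ∈ finiteRank E, ∀ x ∈ s, P x = x := by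
  induction s, hs using Set.Finite.induction_on with
  | empty => exact ⟨0, zero_mem _, by simp⟩
  | @insert a s _ _ ih =>
    obtain ⟨P, hP, hPs⟩ := ih
    obtain ⟨ω, hω, hωa⟩ := hE (a - P a)
    -- `ω - ω ∘ P` vanishes on the vectors fixed by `P`, so the correction at `a` leaves them fixed.
    have hmem : ω - ω ∘ₗ P ∈ E := sub_mem hω (comp_mem_of_mem_finiteRank ω hP)
    refine ⟨P + (ω - ω ∘ₗ P).smulRight (a - P a),
      add_mem hP (smulRight_mem_finiteRank hmem _), forall_mem_insert.2 ⟨?_, fun x hx => ?_⟩⟩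
    · simp [← map_sub, hωa]
    · simp [hPs x hx]

theorem IsRegularDual.exists_finiteRank_lTensor_eq {E : Submodule R (Module.Dual R N)}
    (hE : IsRegularDual E) (α : M ⊗[R] N) : ∃ P ∈ finiteRank E, P.lTensor M α = α := by
  obtain ⟨S, rfl⟩ := TensorProduct.exists_finset α
  obtain ⟨P, hP, hPS⟩ := hE.exists_finiteRank_eqOn (S.finite_toSet.image Prod.snd)
  refine ⟨P, hP, ?_⟩
  rw [map_sum]
  exact Finset.sum_congr rfl fun i hi => by
    rw [LinearMap.lTensor_tmul, hPS _ (mem_image_of_mem _ hi)]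

theorem lTensor_smulRight (η : Module.Dual R N) (u : N) (α : M ⊗[R] N) :
    (η.smulRight u).lTensor M α = TensorProduct.rid R M (η.lTensor M α) ⊗ₜ u := by
  induction α with
  | zero => simp
  | tmul v w => simp [TensorProduct.smul_tmul]
  | add α β hα hβ => simp [hα, hβ, TensorProduct.add_tmul]

theorem apply_rid_lTensor (ω : Module.Dual R M) (η : Module.Dual R N) (α : M ⊗[R] N) :
    ω (TensorProduct.rid R M (η.lTensor M α)) = TensorProduct.dualDistrib R M N (ω ⊗ₜ η) α := by
  induction α with
  | zero => simp
  | tmul v w => simp [mul_comm]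
  | add α β hα hβ => simp [hα, hβ]

theorem IsRegularDual.tensor_eq_zero_iff {D : Submodule R (Module.Dual R M)}
    {E : Submodule R (Module.Dual R N)} (hD : IsRegularDual D) (hE : IsRegularDual E)
    (α : M ⊗[R] N) :
    α = 0 ↔ ∀ ω η, ω ∈ D → η ∈ E → TensorProduct.dualDistrib R M N (ω ⊗ₜ η) α = 0 := by
  refine ⟨by rintro rfl; simp, fun h => ?_⟩
  have hcontr : ∀ η ∈ E, TensorProduct.rid R M (η.lTensor M α) = 0 := fun η hη =>
    hD.eq_zero fun ω hω => (apply_rid_lTensor ω η α).trans (h ω η hω hη)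
  have hkill : finiteRank E ≤ LinearMap.ker ((LinearMap.lTensorHom M).flip α) :=
    Submodule.map₂_le.2 fun η hη u _ => by
      simp [LinearMap.smulRightₗ, lTensor_smulRight, hcontr η hη]
  obtain ⟨P, hP, hPα⟩ := hE.exists_finiteRank_lTensor_eq α
  exact hPα.symm.trans (hkill hP)

end RegularDual

section BoundedDual

variable {R M : Type*} [CommRing R] [AddCommGroup M] [Module R M]

/-- The dual module `ℳ*` of a pointwise normed module, as a submodule of the algebraic dual. -/
def boundedDual [Lattice R] [IsFRing R] (p : M → R) : Submodule R (Module.Dual R M) where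
  carrier := {ω | ∃ g, 0 ≤ g ∧ ∀ v, |ω v| ≤ g * p v}
  zero_mem' := ⟨0, le_rfl, by simp⟩
  add_mem' := by
    rintro ω θ ⟨g, hg, hω⟩ ⟨k, hk, hθ⟩
    refine ⟨g + k, add_nonneg hg hk, fun v => ?_⟩
    calc |ω v + θ v| ≤ |ω v| + |θ v| := abs_add_le _ _
      _ ≤ g * p v + k * p v := add_le_add (hω v) (hθ v)
      _ = (g + k) * p v := (add_mul g k _).symm
  smul_mem' := by
    rintro a ω ⟨g, hg, hω⟩
    refine ⟨|a| * g, mul_nonneg (abs_nonneg a) hg, fun v => ?_⟩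
    calc |a * ω v| = |a| * |ω v| := IsFRing.abs_mul_eq _ _
      _ ≤ |a| * (g * p v) := mul_le_mul_of_nonneg_left (hω v) (abs_nonneg a)
      _ = |a| * g * p v := (mul_assoc _ _ _).symm

variable [ConditionallyCompleteLattice R] [IsFRing R] [IsVonNeumannRegular R]

theorem IsPointwiseNorm.isRegularDual_boundedDual {p : M → R} (hp : IsPointwiseNorm p) :
    IsRegularDual (boundedDual p) := by
  intro u
  obtain ⟨ω, hω, hωu⟩ := exists_dual_abs_le_apply_eq hp.toIsPointwiseSeminorm u
  obtain ⟨b, hb⟩ := IsVonNeumannRegular.exists_mul_mul_self (p u)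
  have hmem : ω ∈ boundedDual p := ⟨1, zero_le_one, fun v => by simpa using hω v⟩
  refine ⟨b • ω, Submodule.smul_mem _ b hmem, sub_eq_zero.1 (hp.eq_zero ?_)⟩
  calc p ((b • ω) u • u - u) = p ((b * p u - 1) • u) := by
        rw [sub_smul, one_smul, LinearMap.smul_apply, hωu, smul_eq_mul]
    _ = |b * p u - 1| * |p u| := by rw [hp.smul, abs_of_nonneg (hp.nonneg u)]
    _ = |p u * b * p u - p u| := by rw [← IsFRing.abs_mul_eq]; ring_nf
    _ = 0 := by rw [hb, sub_self, abs_zero]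

end BoundedDual

section L0

variable {μ : Measure X}

theorem exists_isLUB_range {ι : Type*} [Countable ι] [Nonempty ι] (f : ι → L0 μ)
    (hf : BddAbove (range f)) : ∃ g, IsLUB (range f) g := by
  have hle : ∀ {c}, c ∈ upperBounds (range f) → ∀ᵐ x ∂μ, ∀ i, f i x ≤ c x := fun hc =>
    ae_all_iff.2 fun i => AEEqFun.coeFn_le.2 (hc (mem_range_self i))
  have hmeas : Measurable fun x => ⨆ i, f i x :=
    Measurable.iSup fun i => (f i).stronglyMeasurable.measurable
  let g : L0 μ := AEEqFun.mk _ hmeas.aestronglyMeasurable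
  have hg : ⇑g =ᵐ[μ] fun x => ⨆ i, f i x := AEEqFun.coeFn_mk _ _
  obtain ⟨b, hb⟩ := hf
  refine ⟨g, forall_mem_range.2 fun i => AEEqFun.coeFn_le.1 ?_, fun c hc => AEEqFun.coeFn_le.1 ?_⟩
  · filter_upwards [hg, hle hb] with x hgx hbx
    exact (le_ciSup ⟨b x, forall_mem_range.2 hbx⟩ i).trans_eq hgx.symm
  · filter_upwards [hg, hle hc] with x hgx hcx
    exact hgx.trans_le (ciSup_le hcx)

/-- A bounded, strictly increasing, modular functional on `L⁰(𝕏)`, from which Dedekind completeness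
is deduced; `arctan` makes every element integrable with respect to the finite measure. -/
def arctanIntegral (μ : Measure X) [SFinite μ] (f : L0 μ) : ℝ :=
  ∫ x, Real.arctan (f x) ∂μ.toFinite

theorem integrable_arctan {ν : Measure X} [IsFiniteMeasure ν] {f : X → ℝ}
    (hf : AEMeasurable f ν) : Integrable (fun x => Real.arctan (f x)) ν :=
  Integrable.of_bound (Real.measurable_arctan.comp_aemeasurable hf).aestronglyMeasurable
    (Real.pi / 2) (Eventually.of_forall fun _ => abs_le.2
      ⟨(Real.neg_pi_div_two_lt_arctan _).le, (Real.arctan_lt_pi_div_two _).le⟩)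

section SFinite

variable [SFinite μ]

theorem integrable_arctan_coeFn (f : L0 μ) : Integrable (fun x => Real.arctan (f x)) μ.toFinite :=
  integrable_arctan f.stronglyMeasurable.measurable.aemeasurable

theorem strictMono_arctanIntegral : StrictMono (arctanIntegral μ) := fun f g hfg => by
  have hle : (fun x => Real.arctan (f x)) ≤ᵐ[μ.toFinite] fun x => Real.arctan (g x) := by
    rw [EventuallyLE, ae_toFinite]
    filter_upwards [AEEqFun.coeFn_le.2 hfg.le] with x hx using Real.arctan_strictMono.monotone hx
  refine (integral_mono_ae (integrable_arctan_coeFn f) (integrable_arctan_coeFn g) hle).lt_of_ne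
    fun heq => hfg.ne (AEEqFun.ext ?_)
  rw [integral_eq_iff_of_ae_le (integrable_arctan_coeFn f) (integrable_arctan_coeFn g) hle,
    EventuallyEq, ae_toFinite] at heq
  filter_upwards [heq] with x hx using Real.arctan_injective hx

theorem arctanIntegral_sup_add_inf (f g : L0 μ) :
    arctanIntegral μ (f ⊔ g) + arctanIntegral μ (f ⊓ g) =
      arctanIntegral μ f + arctanIntegral μ g := by
  unfold arctanIntegral
  rw [← integral_add (integrable_arctan_coeFn _) (integrable_arctan_coeFn _),
    ← integral_add (integrable_arctan_coeFn _) (integrable_arctan_coeFn _)]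
  refine integral_congr_ae ?_
  rw [EventuallyEq, ae_toFinite]
  filter_upwards [AEEqFun.coeFn_sup f g, AEEqFun.coeFn_inf f g] with x hsup hinf
  rw [hsup, hinf]
  rcases le_total (f x) (g x) with h | h <;> simp [h, add_comm]

open scoped Classical in
/-- Dedekind completeness of `L⁰(𝕏)`; a set without least upper bound is given the supremum `0`. -/
instance : ConditionallyCompleteLattice (L0 μ) :=
  letI : SupSet (L0 μ) := ⟨fun S => if h : ∃ g, IsLUB S g then h.choose else 0⟩
  { (inferInstance : Lattice (L0 μ)),
    conditionallyCompleteLatticeOfLatticeOfsSup (L0 μ) fun S hb hS => by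
      have h : ∃ g, IsLUB S g := exists_isLUB_of_strictMono_of_modular strictMono_arctanIntegral
        arctanIntegral_sup_add_inf exists_isLUB_range hS hb
      change IsLUB S (dite _ _ _)
      rw [dif_pos h]
      exact h.choose_spec with }

end SFinite

instance : IsOrderedAddMonoid (L0 μ) where
  add_le_add_left f g hfg k := AEEqFun.coeFn_le.1 <| by
    filter_upwards [AEEqFun.coeFn_le.2 hfg, AEEqFun.coeFn_add f k, AEEqFun.coeFn_add g k]
      with x hx hfk hgk
    simpa [hfk, hgk] using hx

theorem coeFn_nonneg {f : L0 μ} : (∀ᵐ x ∂μ, 0 ≤ f x) ↔ 0 ≤ f := by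
  rw [← AEEqFun.coeFn_le]
  exact eventually_congr (AEEqFun.coeFn_zero.mono fun x hx => by rw [hx]; rfl)

instance : ZeroLEOneClass (L0 μ) where
  zero_le_one := coeFn_nonneg.1 (AEEqFun.coeFn_one.mono fun x hx => by rw [hx]; simp)

instance : IsFRing (L0 μ) where
  __ : IsOrderedRing (L0 μ) := .of_mul_nonneg fun f g hf hg => coeFn_nonneg.1 <| by
    filter_upwards [coeFn_nonneg.2 hf, coeFn_nonneg.2 hg, AEEqFun.coeFn_mul f g] with x hfx hgx hx
    simpa [hx] using mul_nonneg hfx hgx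
  abs_mul_eq f g := AEEqFun.ext <| by
    filter_upwards [AEEqFun.coeFn_abs (f * g), AEEqFun.coeFn_mul f g,
      AEEqFun.coeFn_mul |f| |g|, AEEqFun.coeFn_abs f, AEEqFun.coeFn_abs g] with
      x habsmul hmul hmulabs hf hg
    simp [habsmul, hmul, hmulabs, hf, hg, abs_mul]

instance : IsVonNeumannRegular (L0 μ) where
  exists_mul_mul_self f := by
    let g : L0 μ := AEEqFun.compMeasurable (·⁻¹) measurable_inv f
    refine ⟨g, AEEqFun.ext ?_⟩
    filter_upwards [AEEqFun.coeFn_mul (f * g) f, AEEqFun.coeFn_mul f g,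
      AEEqFun.coeFn_compMeasurable _ measurable_inv f] with x hfgf hfg hg
    simp [hfgf, hfg, g, hg]

end L0

theorem isPointwiseNorm_pn (μ : Measure X) [SFinite μ] (M : Type*) [AddCommGroup M]
    [Module (L0 μ) M] [BanachMod μ M] : IsPointwiseNorm (pn μ : M → L0 μ) where
  add_le := BanachMod.pn_add_le
  smul := BanachMod.pn_smul
  eq_zero := (BanachMod.pn_eq_zero _).1

theorem mem_boundedDual_pn {μ : Measure X} [SFinite μ] {M : Type*} [AddCommGroup M]
    [Module (L0 μ) M] [BanachMod μ M] {ω : Module.Dual (L0 μ) M} :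
    ω ∈ boundedDual (pn μ) ↔ IsDual μ ω :=
  Iff.rfl

theorem null_tensor_criterion_general {R M N : Type*} [CommRing R] [ConditionallyCompleteLattice R]
    [IsFRing R] [IsVonNeumannRegular R] [AddCommGroup M] [Module R M] [AddCommGroup N] [Module R N]
    {p : M → R} {q : N → R} (hp : IsPointwiseNorm p) (hq : IsPointwiseNorm q) (α : M ⊗[R] N) :
    α = 0 ↔ ∀ ω η, ω ∈ boundedDual p → η ∈ boundedDual q →
      TensorProduct.dualDistrib R M N (ω ⊗ₜ η) α = 0 :=
  hp.isRegularDual_boundedDual.tensor_eq_zero_iff hq.isRegularDual_boundedDual α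

/-- null tensors in Banach `L⁰`-modules. Let `𝕏` be a σ-finite measure
space and `ℳ`, `𝒩` Banach `L⁰(𝕏)`-modules. A tensor `α = ∑_{i=1}^n v_i ⊗ w_i ∈ ℳ ⊗ 𝒩`
is zero if and only if `∑_{i=1}^n ω(v_i) η(w_i) = 0` in `L⁰(𝕏)` for every `ω ∈ ℳ*` and
`η ∈ 𝒩*`. -/
theorem null_tensor_criterion
    (μ : Measure X) [SigmaFinite μ]
    (M : Type*) [AddCommGroup M] [Module (L0 μ) M] [BanachMod μ M]
    (N : Type*) [AddCommGroup N] [Module (L0 μ) N] [BanachMod μ N]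
    (n : ℕ) (v : Fin n → M) (w : Fin n → N) :
    (∑ i, v i ⊗ₜ[L0 μ] w i) = 0 ↔
      ∀ (ω : M →ₗ[L0 μ] L0 μ) (η : N →ₗ[L0 μ] L0 μ), IsDual μ ω → IsDual μ η →
        (∑ i, ω (v i) * η (w i)) = 0 := by
  simpa [map_sum, mem_boundedDual_pn] using null_tensor_criterion_general (isPointwiseNorm_pn μ M)
    (isPointwiseNorm_pn μ N) (∑ i, v i ⊗ₜ w i)

end Paper
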